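/- Let f : {0,1}^n → {0,1} be a Boolean function on the cube equipped with the uniform measure μ_{1/2}, and let r ∈ ℕ with r ≥ 1. Then ‖f^{≤r}‖₂² ≤ 3^r·μ_{1/2}(f)^{3/2}. -/

import Mathlib

open Finset

namespace GlobalHC

variable {n : ℕ}

/-- Expectation with respect to the `p`-biased measure on `{0,1}^n`. -/
noncomputable def Ep (p : ℝ) (f : (Fin n → Bool) → ℝ) : ℝ :=
  ∑ x : Fin n → Bool, (∏ i, if x i then p else 1 - p) * f x

/-- The `r`-norm with respect to the `p`-biased measure. -/
noncomputable def pnorm (p r : ℝ) (f : (Fin n → Bool) → ℝ) : ℝ :=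
  (Ep p fun x => |f x| ^ r) ^ (1 / r)

/-- The `p`-biased character `χ_S`. -/
noncomputable def chi (p : ℝ) (S : Finset (Fin n)) (x : Fin n → Bool) : ℝ :=
  ∏ i ∈ S, ((if x i then (1 : ℝ) else 0) - p) / Real.sqrt (p * (1 - p))

/-- The `p`-biased Fourier coefficient `f̂(S)`. -/
noncomputable def coeff (p : ℝ) (f : (Fin n → Bool) → ℝ) (S : Finset (Fin n)) : ℝ :=
  Ep p fun x => f x * chi p S x

/-- The derivative `D_S f = Σ_{T ⊇ S} f̂(T) χ_{T∖S}`. -/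
noncomputable def derivS (p : ℝ) (S : Finset (Fin n)) (f : (Fin n → Bool) → ℝ) :
    (Fin n → Bool) → ℝ :=
  fun x => ∑ T ∈ Finset.univ.filter (fun T => S ⊆ T), coeff p f T * chi p (T \ S) x

/-- The generalised influence `I_S(f) = σ^{-2|S|} Σ_{T ⊇ S} f̂(T)²`. -/
noncomputable def genInf (p : ℝ) (S : Finset (Fin n)) (f : (Fin n → Bool) → ℝ) : ℝ :=
  (∑ T ∈ Finset.univ.filter (fun T => S ⊆ T), coeff p f T ^ 2) / (p * (1 - p)) ^ S.card

/-- The noise operator `T_ρ f = Σ_S ρ^{|S|} f̂(S) χ_S`. -/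
noncomputable def noise (p ρ : ℝ) (f : (Fin n → Bool) → ℝ) : (Fin n → Bool) → ℝ :=
  fun x => ∑ S : Finset (Fin n), ρ ^ S.card * coeff p f S * chi p S x

/-- The degree-`r` truncation `f^{≤ r}`. -/
noncomputable def trunc (p : ℝ) (r : ℕ) (f : (Fin n → Bool) → ℝ) : (Fin n → Bool) → ℝ :=
  fun x => ∑ S ∈ Finset.univ.filter (fun S : Finset (Fin n) => S.card ≤ r),
    coeff p f S * chi p S x

/-- The restriction `f_{J→1}` setting all coordinates in `J` to `1`. -/
def restrict1 (J : Finset (Fin n)) (f : (Fin n → Bool) → ℝ) : (Fin n → Bool) → ℝ :=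
  fun x => f (fun i => if i ∈ J then true else x i)

/-- `f` is `(r,δ)`-global (for the `p`-biased measure). -/
def IsGlobal (p r δ : ℝ) (f : (Fin n → Bool) → ℝ) : Prop :=
  ∀ J : Finset (Fin n), (J.card : ℝ) ≤ r → Ep p (restrict1 J f) ≤ Ep p f + δ

/-- The total influence `I[f] = Σ_i Pr_{μ_p}[f(x ⊕ e_i) ≠ f(x)]`. -/
noncomputable def totalInf (p : ℝ) (f : (Fin n → Bool) → ℝ) : ℝ :=
  ∑ i : Fin n, Ep p fun x => if f (Function.update x i (!x i)) = f x then 0 else 1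

/-- Noise stability `Stab_ρ(f) = Σ_S ρ^{|S|} f̂(S)²` (w.r.t. `μ_p`). -/
noncomputable def stab (p ρ : ℝ) (f : (Fin n → Bool) → ℝ) : ℝ :=
  ∑ S : Finset (Fin n), ρ ^ S.card * coeff p f S ^ 2

/-- `f` is monotone. -/
def Mono (f : (Fin n → Bool) → ℝ) : Prop :=
  ∀ x y : Fin n → Bool, (∀ i, x i ≤ y i) → f x ≤ f y

/-!
Write `g = f^{≤r}`. Since `g` is an orthogonal projection of `f`, Hölder's inequality gives
`‖g‖₂² = 𝔼[f g] ≤ ‖f‖_{4/3} ‖g‖₄`, and Bonami's inequality `‖g‖₄² ≤ 3^r ‖g‖₂²` for polynomials of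
degree at most `r` turns this into `‖g‖₂² ≤ 3^r ‖f‖_{4/3}²`, valid for every real-valued `f`. When
`f` takes values in `{0, 1}`, `‖f‖_{4/3}² = μ(f)^{3/2}`. Bonami's inequality is proved by induction
on the set of characters occurring in `g`: singling out a coordinate `i`, write `g = u + χ_i v` with
`u`, `v` not depending on it; the terms of `𝔼[g⁴]` odd in `χ_i` vanish, and the cross term
`6 𝔼[u² v²]` is controlled by the Cauchy-Schwarz inequality.
-/

lemma sum_nonMemberSubfamily_add_sum_memberSubfamily {α M : Type*} [DecidableEq α]
    [AddCommMonoid M] (𝒜 : Finset (Finset α)) (i : α) (F : Finset α → M) :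
    ∑ S ∈ 𝒜.nonMemberSubfamily i, F S + ∑ S ∈ 𝒜.memberSubfamily i, F (insert i S) =
      ∑ S ∈ 𝒜, F S := by
  have hinj : Set.InjOn (insert i) (𝒜.memberSubfamily i : Set (Finset α)) :=
    insert_erase_invOn.2.injOn.mono fun S hS => (mem_memberSubfamily.1 hS).2
  rw [← sum_image (f := F) hinj, image_insert_memberSubfamily, nonMemberSubfamily, add_comm,
    sum_filter_add_sum_filter_not]

section Expectation

variable {p : ℝ} {f : (Fin n → Bool) → ℝ}

lemma weight_nonneg (hp : p ∈ Set.Icc 0 1) (x : Fin n → Bool) :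
    0 ≤ ∏ i, if x i then p else 1 - p :=
  prod_nonneg fun i _ => by split_ifs <;> linarith [hp.1, hp.2]

lemma Ep_add (f g : (Fin n → Bool) → ℝ) : Ep p (fun x => f x + g x) = Ep p f + Ep p g := by
  simp only [Ep, mul_add, sum_add_distrib]

lemma Ep_const_mul (c : ℝ) (f : (Fin n → Bool) → ℝ) : Ep p (fun x => c * f x) = c * Ep p f := by
  simp only [Ep, mul_sum, mul_left_comm]

lemma Ep_sum {ι : Type*} (s : Finset ι) (F : ι → (Fin n → Bool) → ℝ) :
    Ep p (fun x => ∑ j ∈ s, F j x) = ∑ j ∈ s, Ep p (F j) := by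
  simp only [Ep, mul_sum]
  exact sum_comm

lemma Ep_nonneg (hp : p ∈ Set.Icc 0 1) (hf : ∀ x, 0 ≤ f x) : 0 ≤ Ep p f :=
  sum_nonneg fun x _ => mul_nonneg (weight_nonneg hp x) (hf x)

lemma Ep_prod (g : Fin n → Bool → ℝ) :
    Ep p (fun x => ∏ i, g i (x i)) = ∏ i, (p * g i true + (1 - p) * g i false) := by
  have hfactor (i : Fin n) :
      p * g i true + (1 - p) * g i false = ∑ b : Bool, (if b then p else 1 - p) * g i b := by
    simp
  simp only [Ep, hfactor, Fintype.prod_sum, ← prod_mul_distrib]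

lemma Ep_const (c : ℝ) : Ep p (fun _ : Fin n → Bool => c) = c := by
  have hone : Ep p (fun _ : Fin n → Bool => 1) = 1 := by
    simpa using Ep_prod (p := p) fun (_ : Fin n) _ => 1
  simpa [hone] using Ep_const_mul (p := p) c fun _ : Fin n → Bool => 1

lemma pnorm_nonneg (hp : p ∈ Set.Icc 0 1) (q : ℝ) (f : (Fin n → Bool) → ℝ) : 0 ≤ pnorm p q f :=
  Real.rpow_nonneg (Ep_nonneg hp fun _ => by positivity) _

lemma pnorm_pow_of_even (hp : p ∈ Set.Icc 0 1) {k : ℕ} (hk : Even k) (hk₀ : k ≠ 0)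
    (f : (Fin n → Bool) → ℝ) : pnorm p k f ^ k = Ep p fun x => f x ^ k := by
  simp only [pnorm, Real.rpow_natCast, hk.pow_abs, one_div]
  exact Real.rpow_inv_natCast_pow (Ep_nonneg hp fun x => hk.pow_nonneg (f x)) hk₀

lemma pnorm_pow_of_boolean (hp : p ∈ Set.Icc 0 1) (hf : ∀ x, f x = 0 ∨ f x = 1) {q : ℝ}
    (hq : q ≠ 0) (k : ℕ) : pnorm p q f ^ k = Ep p f ^ (k / q) := by
  have habs (x : Fin n → Bool) : |f x| ^ q = f x := by
    rcases hf x with h | h <;> simp [h, hq]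
  have hE : 0 ≤ Ep p f := Ep_nonneg hp fun x => by rw [← habs x]; positivity
  simp only [pnorm, habs]
  rw [← Real.rpow_mul_natCast hE, one_div_mul_eq_div]

lemma Ep_mul_le_pnorm_mul_pnorm (hp : p ∈ Set.Icc 0 1) {a b : ℝ} (hab : a.HolderConjugate b)
    (f g : (Fin n → Bool) → ℝ) :
    Ep p (fun x => f x * g x) ≤ pnorm p a f * pnorm p b g := by
  let w (x : Fin n → Bool) : ℝ := ∏ i, if x i then p else 1 - p
  have hw (x : Fin n → Bool) : 0 ≤ w x := weight_nonneg hp x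
  have hsplit (x : Fin n → Bool) :
      w x * (f x * g x) = w x ^ a⁻¹ * f x * (w x ^ b⁻¹ * g x) := by
    rw [mul_mul_mul_comm, ← Real.rpow_add' (hw x) (by simp [hab.inv_add_inv_eq_one]),
      hab.inv_add_inv_eq_one, Real.rpow_one]
  have habs {c : ℝ} (hc : c ≠ 0) (h : (Fin n → Bool) → ℝ) (x : Fin n → Bool) :
      |w x ^ c⁻¹ * h x| ^ c = w x * |h x| ^ c := by
    have hwc : 0 ≤ w x ^ c⁻¹ := Real.rpow_nonneg (hw x) _
    rw [abs_mul, abs_of_nonneg hwc, Real.mul_rpow hwc (abs_nonneg _),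
      Real.rpow_inv_rpow (hw x) hc]
  calc Ep p (fun x => f x * g x)
      = ∑ x, w x ^ a⁻¹ * f x * (w x ^ b⁻¹ * g x) := sum_congr rfl fun x _ => hsplit x
    _ ≤ (∑ x, |w x ^ a⁻¹ * f x| ^ a) ^ (1 / a) * (∑ x, |w x ^ b⁻¹ * g x| ^ b) ^ (1 / b) :=
      Real.inner_le_Lp_mul_Lq univ _ _ hab
    _ = pnorm p a f * pnorm p b g := by
      simp only [habs hab.ne_zero, habs hab.symm.ne_zero]
      rfl

end Expectation

section Fourier

variable {p : ℝ}

lemma chi_insert {i : Fin n} {S : Finset (Fin n)} (hi : i ∉ S) (x : Fin n → Bool) :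
    chi p (insert i S) x = chi p {i} x * chi p S x := by
  simp only [chi, prod_insert hi, prod_singleton]

lemma dependsOn_chi (S : Finset (Fin n)) : DependsOn (chi p S) S := fun x y hxy =>
  prod_congr rfl fun i hi => by rw [hxy i hi]

lemma Ep_chi_singleton_mul_eq_zero {i : Fin n} {w : (Fin n → Bool) → ℝ}
    (hw : DependsOn w {i}ᶜ) : Ep p (fun x => chi p {i} x * w x) = 0 := by
  let flip (x : Fin n → Bool) : Fin n → Bool := Function.update x i (!x i)
  have hflip_self (x : Fin n → Bool) : flip x i = !x i := Function.update_self ..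
  have hflip_of_ne (x : Fin n → Bool) {j : Fin n} (hj : j ≠ i) : flip x j = x j :=
    Function.update_of_ne hj ..
  have hw_flip (x : Fin n → Bool) : w (flip x) = w x := hw fun j hj => hflip_of_ne x hj
  have hrest (x : Fin n → Bool) : (∏ j ∈ {i}ᶜ, if flip x j then p else 1 - p) =
      ∏ j ∈ {i}ᶜ, if x j then p else 1 - p :=
    prod_congr rfl fun j hj => by rw [hflip_of_ne x (by simpa using hj)]
  refine sum_involution (fun x _ => flip x) (fun x _ => ?_) (fun x _ _ h => ?_)
    (fun _ _ => mem_univ _) (fun x _ => by simp [flip])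
  · simp only [Fintype.prod_eq_mul_prod_compl i, hrest, hw_flip, chi, prod_singleton, hflip_self]
    cases x i <;> simp <;> ring
  · simpa [hflip_self] using congrFun h i

lemma Ep_chi_mul_chi (hp : p ∈ Set.Ioo 0 1) (S T : Finset (Fin n)) :
    Ep p (fun x => chi p S x * chi p T x) = if S = T then 1 else 0 := by
  let φ (b : Bool) : ℝ := ((if b then 1 else 0) - p) / √(p * (1 - p))
  have hσ_pos : 0 < p * (1 - p) := mul_pos hp.1 (sub_pos.2 hp.2)
  have hσ : √(p * (1 - p)) ≠ 0 := (Real.sqrt_pos.2 hσ_pos).ne'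
  have hφ_mean : p * φ true + (1 - p) * φ false = 0 := by
    simp only [φ, if_true, Bool.false_eq_true, if_false]
    ring
  have hφ_var : p * (φ true * φ true) + (1 - p) * (φ false * φ false) = 1 := by
    simp only [φ, if_true, Bool.false_eq_true, if_false]
    field_simp
    rw [Real.sq_sqrt hσ_pos.le]
    ring
  have hchi (x : Fin n → Bool) : chi p S x * chi p T x =
      ∏ i, (if i ∈ S then φ (x i) else 1) * (if i ∈ T then φ (x i) else 1) := by
    simp only [prod_mul_distrib, prod_ite_mem, univ_inter]
    rfl
  simp only [hchi]
  rw [Ep_prod fun i b => (if i ∈ S then φ b else 1) * (if i ∈ T then φ b else 1)]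
  have hfactor (i : Fin n) :
      p * ((if i ∈ S then φ true else 1) * (if i ∈ T then φ true else 1)) +
        (1 - p) * ((if i ∈ S then φ false else 1) * (if i ∈ T then φ false else 1)) =
      if i ∈ S ↔ i ∈ T then 1 else 0 := by
    by_cases hS : i ∈ S <;> by_cases hT : i ∈ T <;> simp [hS, hT, hφ_mean, hφ_var]
  simp only [hfactor, Fintype.prod_boole]
  exact ite_congr (propext Finset.ext_iff.symm) (fun _ => rfl) fun _ => rfl

/-- The multilinear polynomial `Σ_{S ∈ 𝒮} a_S χ_S`. The set `𝒮` of admissible monomials is kept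
apart from the coefficients, so that `f^{≤ r}` is the case where `a` is the Fourier transform of `f`
and `𝒮` consists of the sets of size at most `r`. -/
noncomputable def fourierSum (p : ℝ) (𝒮 : Finset (Finset (Fin n))) (a : Finset (Fin n) → ℝ)
    (x : Fin n → Bool) : ℝ :=
  ∑ S ∈ 𝒮, a S * chi p S x

variable (𝒮 : Finset (Finset (Fin n))) (a : Finset (Fin n) → ℝ)

lemma trunc_eq_fourierSum (r : ℕ) (f : (Fin n → Bool) → ℝ) :
    trunc p r f = fourierSum p {S | #S ≤ r} (coeff p f) := rfl

lemma Ep_mul_fourierSum (f : (Fin n → Bool) → ℝ) :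
    Ep p (fun x => f x * fourierSum p 𝒮 a x) = ∑ S ∈ 𝒮, a S * coeff p f S := by
  simp only [fourierSum, mul_sum, Ep_sum, coeff, ← Ep_const_mul, mul_left_comm]

lemma coeff_fourierSum (hp : p ∈ Set.Ioo 0 1) (T : Finset (Fin n)) :
    coeff p (fourierSum p 𝒮 a) T = if T ∈ 𝒮 then a T else 0 := by
  simp only [coeff, fourierSum, sum_mul, mul_assoc, Ep_sum, Ep_const_mul, Ep_chi_mul_chi hp,
    mul_ite, mul_one, mul_zero, sum_ite_eq']

lemma Ep_fourierSum_sq (hp : p ∈ Set.Ioo 0 1) :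
    Ep p (fun x => fourierSum p 𝒮 a x ^ 2) = ∑ S ∈ 𝒮, a S ^ 2 := by
  simp only [sq, Ep_mul_fourierSum, coeff_fourierSum 𝒮 a hp]
  exact sum_congr rfl fun S hS => by rw [if_pos hS]

lemma Ep_mul_trunc (hp : p ∈ Set.Ioo 0 1) (r : ℕ) (f : (Fin n → Bool) → ℝ) :
    Ep p (fun x => f x * trunc p r f x) = Ep p fun x => trunc p r f x ^ 2 := by
  rw [trunc_eq_fourierSum, Ep_fourierSum_sq _ _ hp, Ep_mul_fourierSum]
  simp only [sq]

lemma fourierSum_eq_add_chi_mul (i : Fin n) (x : Fin n → Bool) :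
    fourierSum p 𝒮 a x = fourierSum p (𝒮.nonMemberSubfamily i) a x +
      chi p {i} x * fourierSum p (𝒮.memberSubfamily i) (fun S => a (insert i S)) x := by
  simp only [fourierSum, ← sum_nonMemberSubfamily_add_sum_memberSubfamily 𝒮 i, mul_sum]
  congr 1
  refine sum_congr rfl fun S hS => ?_
  rw [chi_insert (mem_memberSubfamily.1 hS).2, mul_left_comm]

lemma dependsOn_fourierSum {𝒮 : Finset (Finset (Fin n))} {A : Set (Fin n)} (h𝒮 : ∀ S ∈ 𝒮, ↑S ⊆ A)
    (a : Finset (Fin n) → ℝ) : DependsOn (fourierSum p 𝒮 a) A := fun x y hxy =>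
  sum_congr rfl fun S hS => by rw [(dependsOn_chi S).mono (h𝒮 S hS) hxy]

end Fourier

section Hypercontractivity

lemma half_mem_Ioo : (1 / 2 : ℝ) ∈ Set.Ioo 0 1 := by norm_num

lemma half_mem_Icc : (1 / 2 : ℝ) ∈ Set.Icc 0 1 := Set.Ioo_subset_Icc_self half_mem_Ioo

lemma chi_half_singleton_sq (i : Fin n) (x : Fin n → Bool) : chi (1 / 2) {i} x ^ 2 = 1 := by
  simp only [chi, prod_singleton, div_pow]
  rw [Real.sq_sqrt (by norm_num)]
  split_ifs <;> norm_num

variable {i : Fin n} {u v : (Fin n → Bool) → ℝ}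

lemma Ep_half_add_chi_mul_pow_four (hu : DependsOn u {i}ᶜ) (hv : DependsOn v {i}ᶜ) :
    Ep (1 / 2) (fun x => (u x + chi (1 / 2) {i} x * v x) ^ 4) =
      Ep (1 / 2) (fun x => u x ^ 4) + 6 * Ep (1 / 2) (fun x => u x ^ 2 * v x ^ 2) +
        Ep (1 / 2) (fun x => v x ^ 4) := by
  have hexpand (x : Fin n → Bool) : (u x + chi (1 / 2) {i} x * v x) ^ 4 =
      u x ^ 4 + 6 * (u x ^ 2 * v x ^ 2) + v x ^ 4 +
        chi (1 / 2) {i} x * (4 * u x ^ 3 * v x + 4 * u x * v x ^ 3) := by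
    linear_combination (6 * u x ^ 2 * v x ^ 2 + 4 * u x * v x ^ 3 * chi (1 / 2) {i} x +
      v x ^ 4 * (chi (1 / 2) {i} x ^ 2 + 1)) * chi_half_singleton_sq i x
  have hodd : DependsOn (fun x => 4 * u x ^ 3 * v x + 4 * u x * v x ^ 3) {i}ᶜ :=
    fun x y hxy => by simp only [hu hxy, hv hxy]
  simp only [hexpand, Ep_add, Ep_const_mul, Ep_chi_singleton_mul_eq_zero hodd, add_zero]

lemma Ep_half_add_chi_mul_pow_four_le (hu : DependsOn u {i}ᶜ) (hv : DependsOn v {i}ᶜ)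
    {U V : ℝ} (hU : 0 ≤ U) (hV : 0 ≤ V) (huU : Ep (1 / 2) (fun x => u x ^ 4) ≤ U ^ 2)
    (hvV : Ep (1 / 2) (fun x => v x ^ 4) ≤ V ^ 2) :
    Ep (1 / 2) (fun x => (u x + chi (1 / 2) {i} x * v x) ^ 4) ≤ (U + 3 * V) ^ 2 := by
  have hnorm {w : (Fin n → Bool) → ℝ} {W : ℝ} (hW : 0 ≤ W)
      (hwW : Ep (1 / 2) (fun x => w x ^ 4) ≤ W ^ 2) :
      pnorm (1 / 2) 2 (fun x => w x ^ 2) ≤ W := by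
    refine le_of_sq_le_sq ?_ hW
    have hsq := pnorm_pow_of_even half_mem_Icc even_two two_ne_zero fun x => w x ^ 2
    simp only [← pow_mul, Nat.cast_ofNat] at hsq
    exact hsq.trans_le hwW
  have hcross : Ep (1 / 2) (fun x => u x ^ 2 * v x ^ 2) ≤ U * V :=
    (Ep_mul_le_pnorm_mul_pnorm half_mem_Icc .two_two _ _).trans <|
      mul_le_mul (hnorm hU huU) (hnorm hV hvV) (pnorm_nonneg half_mem_Icc _ _) hU
  rw [Ep_half_add_chi_mul_pow_four hu hv]
  linarith [sq_nonneg V]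

lemma Ep_half_fourierSum_pow_four_le (𝒮 : Finset (Finset (Fin n))) (a : Finset (Fin n) → ℝ) :
    Ep (1 / 2) (fun x => fourierSum (1 / 2) 𝒮 a x ^ 4) ≤ (∑ S ∈ 𝒮, 3 ^ #S * a S ^ 2) ^ 2 := by
  induction 𝒮 using memberFamily_induction_on generalizing a with
  | empty => simp [fourierSum, Ep_const]
  | singleton_empty => simp [fourierSum, chi, Ep_const, ← pow_mul]
  | @subfamily i 𝒮 ihu ihv =>
    have hnonMember : DependsOn (fourierSum (1 / 2) (𝒮.nonMemberSubfamily i) a) {i}ᶜ :=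
      dependsOn_fourierSum (fun S hS => by simpa using (mem_nonMemberSubfamily.1 hS).2) a
    have hmember :
        DependsOn (fourierSum (1 / 2) (𝒮.memberSubfamily i) fun S => a (insert i S)) {i}ᶜ :=
      dependsOn_fourierSum (fun S hS => by simpa using (mem_memberSubfamily.1 hS).2) _
    have hsum : ∑ S ∈ 𝒮, (3 : ℝ) ^ #S * a S ^ 2 =
        ∑ S ∈ 𝒮.nonMemberSubfamily i, 3 ^ #S * a S ^ 2 +
          3 * ∑ S ∈ 𝒮.memberSubfamily i, 3 ^ #S * a (insert i S) ^ 2 := by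
      rw [← sum_nonMemberSubfamily_add_sum_memberSubfamily 𝒮 i, mul_sum]
      congr 1
      refine sum_congr rfl fun S hS => ?_
      rw [card_insert_of_notMem (mem_memberSubfamily.1 hS).2, pow_succ', mul_assoc]
    simp only [fourierSum_eq_add_chi_mul 𝒮 a i, hsum]
    exact Ep_half_add_chi_mul_pow_four_le hnonMember hmember (by positivity) (by positivity)
      (ihu a) (ihv _)

lemma pnorm_four_fourierSum_sq_le {r : ℕ} {𝒮 : Finset (Finset (Fin n))} (h𝒮 : ∀ S ∈ 𝒮, #S ≤ r)
    (a : Finset (Fin n) → ℝ) :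
    pnorm (1 / 2) 4 (fourierSum (1 / 2) 𝒮 a) ^ 2 ≤
      3 ^ r * pnorm (1 / 2) 2 (fourierSum (1 / 2) 𝒮 a) ^ 2 := by
  set g := fourierSum (1 / 2) 𝒮 a with hg
  have hfour : pnorm (1 / 2) 4 g ^ 4 = Ep (1 / 2) fun x => g x ^ 4 :=
    mod_cast pnorm_pow_of_even half_mem_Icc (k := 4) (by decide) four_ne_zero g
  have htwo : pnorm (1 / 2) 2 g ^ 2 = Ep (1 / 2) fun x => g x ^ 2 :=
    mod_cast pnorm_pow_of_even half_mem_Icc even_two two_ne_zero g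
  have hdegree : ∑ S ∈ 𝒮, 3 ^ #S * a S ^ 2 ≤ 3 ^ r * pnorm (1 / 2) 2 g ^ 2 := by
    rw [htwo, hg, Ep_fourierSum_sq 𝒮 a half_mem_Ioo, mul_sum]
    gcongr with S hS
    exacts [by norm_num, h𝒮 S hS]
  refine le_of_sq_le_sq ?_ (by positivity)
  calc (pnorm (1 / 2) 4 g ^ 2) ^ 2 = Ep (1 / 2) fun x => g x ^ 4 := by rw [← hfour]; ring
    _ ≤ (∑ S ∈ 𝒮, 3 ^ #S * a S ^ 2) ^ 2 := Ep_half_fourierSum_pow_four_le 𝒮 a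
    _ ≤ (3 ^ r * pnorm (1 / 2) 2 g ^ 2) ^ 2 := by gcongr

end Hypercontractivity

theorem statement7_general (r : ℕ) (f : (Fin n → Bool) → ℝ) :
    pnorm (1 / 2) 2 (trunc (1 / 2) r f) ^ 2 ≤ 3 ^ r * pnorm (1 / 2) (4 / 3) f ^ 2 := by
  set g := trunc (1 / 2) r f
  have hbonami : pnorm (1 / 2) 4 g ^ 2 ≤ 3 ^ r * pnorm (1 / 2) 2 g ^ 2 :=
    pnorm_four_fourierSum_sq_le (fun S hS => (mem_filter.1 hS).2) _
  have hconj : (4 / 3 : ℝ).HolderConjugate 4 := Real.holderConjugate_iff.2 (by norm_num)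
  have hholder : pnorm (1 / 2) 2 g ^ 2 ≤ pnorm (1 / 2) (4 / 3) f * pnorm (1 / 2) 4 g :=
    calc pnorm (1 / 2) 2 g ^ 2 = Ep (1 / 2) fun x => g x ^ 2 :=
        mod_cast pnorm_pow_of_even half_mem_Icc even_two two_ne_zero g
      _ = Ep (1 / 2) fun x => f x * g x := (Ep_mul_trunc half_mem_Ioo r f).symm
      _ ≤ _ := Ep_mul_le_pnorm_mul_pnorm half_mem_Icc hconj f g
  obtain hzero | hpos := (sq_nonneg (pnorm (1 / 2) 2 g)).eq_or_lt
  · rw [← hzero]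
    positivity
  refine le_of_mul_le_mul_right ?_ hpos
  calc pnorm (1 / 2) 2 g ^ 2 * pnorm (1 / 2) 2 g ^ 2
      ≤ (pnorm (1 / 2) (4 / 3) f * pnorm (1 / 2) 4 g) ^ 2 := by rw [← sq]; gcongr
    _ = pnorm (1 / 2) (4 / 3) f ^ 2 * pnorm (1 / 2) 4 g ^ 2 := mul_pow ..
    _ ≤ pnorm (1 / 2) (4 / 3) f ^ 2 * (3 ^ r * pnorm (1 / 2) 2 g ^ 2) := by gcongr
    _ = 3 ^ r * pnorm (1 / 2) (4 / 3) f ^ 2 * pnorm (1 / 2) 2 g ^ 2 := by ring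

/-- low-degree Fourier weight of a Boolean function on the uniform cube. -/
theorem statement7 {n : ℕ} (r : ℕ) (hr : 1 ≤ r)
    (f : (Fin n → Bool) → ℝ) (hbool : ∀ x, f x = 0 ∨ f x = 1) :
    pnorm (1/2) 2 (trunc (1/2) r f) ^ 2 ≤ 3 ^ r * Ep (1/2) f ^ ((3 : ℝ)/2) := by
  rw [show (3 : ℝ) / 2 = (2 : ℕ) / (4 / 3) by norm_num,
    ← pnorm_pow_of_boolean half_mem_Icc hbool (by norm_num)]
  exact statement7_general r f

end GlobalHC
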